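/- Let μ be a compactly supported Borel probability measure on [0, ∞) whose free cumulants (k_j)_{j∈ℕ} are all strictly positive, i.e. ∫ tⁿ dμ(t) = ∑_{π ∈ NC(n)} ∏_{V block of π} k_{|V|} for all n ≥ 1 with k_j > 0 for every j. Then the maximum ρ_μ of the support of μ satisfies log ρ_μ = sup{ (1/m₁(p)) ∑_{n≥1} p_n log(k_n / p_n) + Θ(m₁(p))/m₁(p) : p ∈ 𝔐₁¹(ℕ) }. -/

import Mathlib

open MeasureTheory Finset
open scoped ENNReal

noncomputable section

open Classical in
/-- The set of non-crossing partitions of `{1, …, n}`. -/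
def NCP (n : ℕ) : Finset (Finset (Finset ℕ)) :=
  ((Finset.Icc 1 n).powerset.powerset).filter fun π =>
    (∀ V ∈ π, V.Nonempty) ∧
    (∀ a ∈ Finset.Icc 1 n, ∃ V ∈ π, a ∈ V) ∧
    (∀ V₁ ∈ π, ∀ V₂ ∈ π, V₁ ≠ V₂ → V₁ ∩ V₂ = ∅) ∧
    ¬ ∃ V₁ ∈ π, ∃ V₂ ∈ π, V₁ ≠ V₂ ∧ ∃ x₁ ∈ V₁, ∃ y₁ ∈ V₁, ∃ x₂ ∈ V₂, ∃ y₂ ∈ V₂,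
        x₁ < x₂ ∧ x₂ < y₁ ∧ y₁ < y₂

/-- `Θ(m) = log(m−1) − m log(1−1/m)`. -/
def Theta (m : ℝ) : ℝ := Real.log (m - 1) - m * Real.log (1 - m⁻¹)

/-!
Let `C` be the generating function of the free cumulants, without constant term, and `M` that of
the moments. Splitting off the smallest point of a non-crossing partition gives
`M z = 1 + C (z * M z)`. Since all coefficients are nonnegative, truncations of this identity bound
the moments by powers of `K w = (1 + C w) / w` for every `w > 0`, and conversely `w = z * M z`
attains `K w = 1 / z` whenever `M z` converges; hence `ρ_μ` is the infimum of `K` over `w > 0`.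

Gibbs' inequality `∑ p_n log (k_n w ^ n / p_n) ≤ log (C w)` together with the concavity of the
logarithm bounds the functional by `log (K w)`. Equality holds for `p_n = k_n w ^ n / C w` exactly
when the mean of `p` is `(1 + C w) / C w`, that is, at a critical point of `K`. As `K` need not have
a critical point inside the disc of convergence, the optimisers are taken for the truncated series,
and a compactness argument passes to the limit.
-/

section NonCrossing

variable {α : Type*} [LinearOrder α]

/-- Non-crossing partitions of a finite subset of a linear order. The weak inequalities in
`eq_of_interlaced` express disjointness of distinct blocks and absence of crossings at once. -/
structure IsNonCrossingPartition (S : Finset α) (π : Finset (Finset α)) : Prop where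
  subset : ∀ V ∈ π, V ⊆ S
  nonempty : ∀ V ∈ π, V.Nonempty
  exists_mem : ∀ x ∈ S, ∃ V ∈ π, x ∈ V
  eq_of_interlaced : ∀ V ∈ π, ∀ W ∈ π, ∀ x₁ ∈ V, ∀ y₁ ∈ V, ∀ x₂ ∈ W, ∀ y₂ ∈ W,
    x₁ ≤ x₂ → x₂ ≤ y₁ → y₁ ≤ y₂ → V = W

open Classical in
/-- The finite set of non-crossing partitions of `S`. -/
def nonCrossingPartitions (S : Finset α) : Finset (Finset (Finset α)) :=
  {π ∈ S.powerset.powerset | IsNonCrossingPartition S π}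

/-- The sum over all non-crossing partitions of `S` of the product of the weights `f` of the
blocks; with `f V = k #V` this is the right-hand side of the free moment–cumulant formula. -/
def blockSum {R : Type*} [CommSemiring R] (f : Finset α → R) (S : Finset α) : R :=
  ∑ π ∈ nonCrossingPartitions S, ∏ V ∈ π, f V

/-- In the partition `π`, the element `b` immediately follows `a` in the block of `a`
(when `a` is the smallest element of that block). -/
def IsNextInBlock (a b : α) (π : Finset (Finset α)) : Prop :=
  ∃ V ∈ π, a ∈ V ∧ b ∈ V ∧ ∀ x ∈ V, x = a ∨ b ≤ x

/-- Adds `a` to the set `V` if it contains `b`; applied to every block of a partition, this merges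
the new point `a` into the block of `b`. -/
def joinTo (a b : α) (V : Finset α) : Finset α := if b ∈ V then insert a V else V

variable {a b x : α} {S T V W : Finset α} {π σ τ : Finset (Finset α)}

lemma mem_joinTo : x ∈ joinTo a b V ↔ x ∈ V ∨ x = a ∧ b ∈ V := by
  grind [joinTo]

lemma subset_joinTo : V ⊆ joinTo a b V := fun _ hx => mem_joinTo.2 (Or.inl hx)

lemma joinTo_subset : joinTo a b V ⊆ insert a V := fun _ hx => by
  grind [mem_joinTo]

lemma joinTo_of_notMem (hb : b ∉ V) : joinTo a b V = V := if_neg hb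

lemma erase_joinTo (ha : a ∉ V) : (joinTo a b V).erase a = V := by
  grind [mem_joinTo]

lemma joinTo_erase (hab : a ≠ b) (hV : a ∈ V ↔ b ∈ V) : joinTo a b (V.erase a) = V := by
  grind [mem_joinTo]

namespace IsNonCrossingPartition

lemma eq_of_mem_of_mem (hπ : IsNonCrossingPartition S π) (hV : V ∈ π) (hW : W ∈ π)
    (hxV : x ∈ V) (hxW : x ∈ W) : V = W :=
  hπ.eq_of_interlaced V hV W hW x hxV x hxV x hxW x hxW le_rfl le_rfl le_rfl

lemma union (hσ : IsNonCrossingPartition S σ) (hτ : IsNonCrossingPartition T τ)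
    (hST : ∀ x ∈ S, ∀ y ∈ T, x < y) : IsNonCrossingPartition (S ∪ T) (σ ∪ τ) where
  subset V hV := (mem_union.1 hV).elim
    (fun h => (hσ.subset V h).trans subset_union_left)
    (fun h => (hτ.subset V h).trans subset_union_right)
  nonempty V hV := (mem_union.1 hV).elim (hσ.nonempty V) (hτ.nonempty V)
  exists_mem x hx := (mem_union.1 hx).elim
    (fun h => (hσ.exists_mem x h).imp fun _ => And.imp_left (mem_union_left _))
    (fun h => (hτ.exists_mem x h).imp fun _ => And.imp_left (mem_union_right _))
  eq_of_interlaced V hV W hW x₁ hx₁ y₁ hy₁ x₂ hx₂ y₂ hy₂ h₁ h₂ h₃ := by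
    rcases mem_union.1 hV with hV | hV <;> rcases mem_union.1 hW with hW | hW
    · exact hσ.eq_of_interlaced V hV W hW x₁ hx₁ y₁ hy₁ x₂ hx₂ y₂ hy₂ h₁ h₂ h₃
    · exact absurd h₂ (hST y₁ (hσ.subset V hV hy₁) x₂ (hτ.subset W hW hx₂)).not_ge
    · exact absurd h₁ (hST x₂ (hσ.subset W hW hx₂) x₁ (hτ.subset V hV hx₁)).not_ge
    · exact hτ.eq_of_interlaced V hV W hW x₁ hx₁ y₁ hy₁ x₂ hx₂ y₂ hy₂ h₁ h₂ h₃

lemma filter_subset (hπ : IsNonCrossingPartition T π) (hST : S ⊆ T)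
    (hS : ∀ V ∈ π, ∀ x ∈ V, x ∈ S → V ⊆ S) : IsNonCrossingPartition S {V ∈ π | V ⊆ S} where
  subset V hV := (mem_filter.1 hV).2
  nonempty V hV := hπ.nonempty V (mem_filter.1 hV).1
  exists_mem x hx := by
    obtain ⟨V, hV, hxV⟩ := hπ.exists_mem x (hST hx)
    exact ⟨V, mem_filter.2 ⟨hV, hS V hV x hxV hx⟩, hxV⟩
  eq_of_interlaced V hV W hW :=
    hπ.eq_of_interlaced V (mem_filter.1 hV).1 W (mem_filter.1 hW).1

lemma disjoint (hσ : IsNonCrossingPartition S σ) (hτ : IsNonCrossingPartition T τ)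
    (hST : Disjoint S T) : Disjoint σ τ :=
  Finset.disjoint_left.2 fun V hσV hτV => (hσ.nonempty V hσV).ne_empty <|
    disjoint_self_iff_empty V |>.1 (hST.mono (hσ.subset V hσV) (hτ.subset V hτV))

lemma filter_subset_union (hσ : IsNonCrossingPartition S σ) (hτ : IsNonCrossingPartition T τ)
    (hST : Disjoint S T) : {V ∈ σ ∪ τ | V ⊆ S} = σ := by
  have hτS : ∀ V ∈ τ, ¬ V ⊆ S := fun V hV hVS => (hτ.nonempty V hV).ne_empty <|
    disjoint_self_iff_empty V |>.1 (hST.mono hVS (hτ.subset V hV))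
  rw [filter_union, filter_true_of_mem hσ.subset, filter_false_of_mem hτS, union_empty]

lemma erase_nonempty (hπ : IsNonCrossingPartition S π) (ha : {a} ∉ π) (hV : V ∈ π) :
    (V.erase a).Nonempty := by
  rw [nonempty_iff_ne_empty, Ne, erase_eq_empty_iff, not_or]
  exact ⟨(hπ.nonempty V hV).ne_empty, fun h => ha (h ▸ hV)⟩

lemma image_erase (hπ : IsNonCrossingPartition (insert a S) π) (haS : a ∉ S)
    (ha : {a} ∉ π) : IsNonCrossingPartition S (π.image fun V => V.erase a) where
  subset := by
    simp only [forall_mem_image]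
    exact fun V hV => (erase_subset_erase a (hπ.subset V hV)).trans (erase_insert haS).subset
  nonempty := by
    simp only [forall_mem_image]
    exact fun V hV => hπ.erase_nonempty ha hV
  exists_mem x hx := by
    obtain ⟨V, hV, hxV⟩ := hπ.exists_mem x (mem_insert_of_mem hx)
    exact ⟨V.erase a, mem_image_of_mem _ hV,
      mem_erase.2 ⟨ne_of_mem_of_not_mem hx haS, hxV⟩⟩
  eq_of_interlaced := by
    simp only [forall_mem_image]
    intro V hV W hW x₁ hx₁ y₁ hy₁ x₂ hx₂ y₂ hy₂ h₁ h₂ h₃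
    rw [hπ.eq_of_interlaced V hV W hW x₁ (mem_of_mem_erase hx₁) y₁ (mem_of_mem_erase hy₁)
      x₂ (mem_of_mem_erase hx₂) y₂ (mem_of_mem_erase hy₂) h₁ h₂ h₃]

lemma isNextInBlock_mem_iff (hπ : IsNonCrossingPartition S π) (h : IsNextInBlock a b π)
    (hV : V ∈ π) : a ∈ V ↔ b ∈ V := by
  obtain ⟨A, hA, haA, hbA, -⟩ := h
  exact ⟨fun ha => hπ.eq_of_mem_of_mem hA hV haA ha ▸ hbA,
    fun hb => hπ.eq_of_mem_of_mem hA hV hbA hb ▸ haA⟩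

lemma erase_separated_of_isNextInBlock (hπ : IsNonCrossingPartition (insert a S) π)
    (ha : ∀ x ∈ S, a < x) (h : IsNextInBlock a b π) (hV : V ∈ π) :
    V.erase a ⊆ {x ∈ S | x < b} ∨ V.erase a ⊆ {x ∈ S | b ≤ x} := by
  obtain ⟨A, hA, haA, hbA, hmin⟩ := h
  have hVS : ∀ x ∈ V.erase a, x ∈ S := fun x hx =>
    mem_of_mem_insert_of_ne (hπ.subset V hV (mem_of_mem_erase hx)) (ne_of_mem_erase hx)
  by_cases hlt : ∀ x ∈ V.erase a, x < b
  · exact Or.inl fun x hx => mem_filter.2 ⟨hVS x hx, hlt x hx⟩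
  refine Or.inr fun x hx => mem_filter.2 ⟨hVS x hx, ?_⟩
  push Not at hlt
  obtain ⟨y, hy, hby⟩ := hlt
  by_contra! hxb
  obtain rfl : A = V := hπ.eq_of_interlaced A hA V hV a haA b hbA x (mem_of_mem_erase hx)
    y (mem_of_mem_erase hy) (ha x (hVS x hx)).le hxb.le hby
  exact (hmin x (mem_of_mem_erase hx)).elim (ne_of_mem_erase hx) hxb.not_ge

lemma image_joinTo (hπ : IsNonCrossingPartition S π) (ha : ∀ x ∈ S, a < x) (hb : b ∈ S)
    (hsep : ∀ V ∈ π, V ⊆ {x ∈ S | x < b} ∨ V ⊆ {x ∈ S | b ≤ x}) :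
    IsNonCrossingPartition (insert a S) (π.image (joinTo a b)) where
  subset := by
    simp only [forall_mem_image]
    exact fun V hV => joinTo_subset.trans (insert_subset_insert a (hπ.subset V hV))
  nonempty := by
    simp only [forall_mem_image]
    exact fun V hV => (hπ.nonempty V hV).mono subset_joinTo
  exists_mem x hx := by
    rcases mem_insert.1 hx with rfl | hx
    · obtain ⟨V, hV, hbV⟩ := hπ.exists_mem b hb
      exact ⟨joinTo x b V, mem_image_of_mem _ hV, mem_joinTo.2 (Or.inr ⟨rfl, hbV⟩)⟩
    · obtain ⟨V, hV, hxV⟩ := hπ.exists_mem x hx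
      exact ⟨joinTo a b V, mem_image_of_mem _ hV, subset_joinTo hxV⟩
  eq_of_interlaced := by
    have hle : ∀ V ∈ π, ∀ x ∈ joinTo a b V, x = a ∧ b ∈ V ∨ x ∈ V ∧ a < x := fun V hV x hx =>
      (mem_joinTo.1 hx).symm.imp_right fun h => ⟨h, ha x (hπ.subset V hV h)⟩
    simp only [forall_mem_image]
    intro V hV W hW x₁ hx₁ y₁ hy₁ x₂ hx₂ y₂ hy₂ h₁ h₂ h₃
    congr 1
    rcases hle V hV x₁ hx₁ with ⟨rfl, hbV⟩ | ⟨hx₁, hax₁⟩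
    · rcases hle W hW x₂ hx₂ with ⟨-, hbW⟩ | ⟨hx₂, hax₂⟩
      · exact hπ.eq_of_mem_of_mem hV hW hbV hbW
      have hy₁ := ((hle V hV y₁ hy₁).resolve_left fun h => by grind).1
      have hy₂ := ((hle W hW y₂ hy₂).resolve_left fun h => by grind).1
      rcases hsep V hV with hVb | hVb
      · exact absurd (mem_filter.1 (hVb hbV)).2 (lt_irrefl b)
      rcases hsep W hW with hWb | hWb
      · exact absurd (h₃.trans_lt (mem_filter.1 (hWb hy₂)).2) (mem_filter.1 (hVb hy₁)).2.not_gt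
      · exact hπ.eq_of_interlaced V hV W hW b hbV y₁ hy₁ x₂ hx₂ y₂ hy₂
          (mem_filter.1 (hWb hx₂)).2 h₂ h₃
    · have hx₂ := ((hle W hW x₂ hx₂).resolve_left fun h => by grind).1
      have hy₁ := ((hle V hV y₁ hy₁).resolve_left fun h => by grind).1
      have hy₂ := ((hle W hW y₂ hy₂).resolve_left fun h => by grind).1
      exact hπ.eq_of_interlaced V hV W hW x₁ hx₁ y₁ hy₁ x₂ hx₂ y₂ hy₂ h₁ h₂ h₃

lemma isNextInBlock_image_joinTo (hπ : IsNonCrossingPartition S π) (hb : b ∈ S)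
    (hsep : ∀ V ∈ π, V ⊆ {x ∈ S | x < b} ∨ V ⊆ {x ∈ S | b ≤ x}) :
    IsNextInBlock a b (π.image (joinTo a b)) := by
  obtain ⟨B, hB, hbB⟩ := hπ.exists_mem b hb
  refine ⟨joinTo a b B, mem_image_of_mem _ hB, mem_joinTo.2 (Or.inr ⟨rfl, hbB⟩),
    subset_joinTo hbB, fun x hx => (mem_joinTo.1 hx).symm.imp And.left fun hxB => ?_⟩
  rcases hsep B hB with h | h
  · exact absurd (mem_filter.1 (h hbB)).2 (lt_irrefl b)
  · exact (mem_filter.1 (h hxB)).2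

lemma exists_isNextInBlock (hπ : IsNonCrossingPartition (insert a S) π) (ha : {a} ∉ π) :
    ∃ b ∈ S, IsNextInBlock a b π := by
  obtain ⟨A, hA, haA⟩ := hπ.exists_mem a (mem_insert_self a S)
  have hne := hπ.erase_nonempty ha hA
  have hmem := min'_mem _ hne
  refine ⟨(A.erase a).min' hne, mem_of_mem_insert_of_ne (hπ.subset A hA (mem_of_mem_erase hmem))
    (ne_of_mem_erase hmem), A, hA, haA, mem_of_mem_erase hmem, fun x hx => ?_⟩
  exact or_iff_not_imp_left.2 fun hxa => min'_le _ _ (mem_erase.2 ⟨hxa, hx⟩)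

lemma isNextInBlock_unique {c : α} (hπ : IsNonCrossingPartition S π) (hab : a ≠ b) (hac : a ≠ c)
    (hb : IsNextInBlock a b π) (hc : IsNextInBlock a c π) : b = c := by
  obtain ⟨A, hA, haA, hbA, hbmin⟩ := hb
  obtain ⟨B, hB, haB, hcB, hcmin⟩ := hc
  obtain rfl := hπ.eq_of_mem_of_mem hA hB haA haB
  exact le_antisymm ((hbmin c hcB).resolve_left hac.symm) ((hcmin b hbA).resolve_left hab.symm)

lemma singleton_notMem (hπ : IsNonCrossingPartition S π) (hab : a ≠ b)
    (h : IsNextInBlock a b π) : {a} ∉ π := fun hmem =>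
  hab.symm (mem_singleton.1 ((hπ.isNextInBlock_mem_iff h hmem).1 (mem_singleton_self a)))

end IsNonCrossingPartition

lemma mem_nonCrossingPartitions :
    π ∈ nonCrossingPartitions S ↔ IsNonCrossingPartition S π := by
  simp only [nonCrossingPartitions, mem_filter, mem_powerset, and_iff_right_iff_imp]
  exact fun h V hV => mem_powerset.2 (h.subset V hV)

variable {R : Type*} [CommSemiring R]

lemma blockSum_congr {f g : Finset α → R} (h : ∀ V ⊆ S, f V = g V) :
    blockSum f S = blockSum g S :=
  sum_congr rfl fun _ hπ => prod_congr rfl fun V hV =>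
    h V ((mem_nonCrossingPartitions.1 hπ).subset V hV)

@[simp]
lemma blockSum_empty (f : Finset α → R) : blockSum f ∅ = 1 := by
  have h : nonCrossingPartitions (∅ : Finset α) = {∅} := by
    ext π
    rw [mem_nonCrossingPartitions, mem_singleton]
    refine ⟨fun h => eq_empty_of_forall_notMem fun V hV =>
      (h.nonempty V hV).ne_empty (subset_empty.1 (h.subset V hV)), ?_⟩
    rintro rfl
    constructor <;> simp
  simp [blockSum, h]

@[simp]
lemma blockSum_singleton (f : Finset α → R) (a : α) : blockSum f {a} = f {a} := by
  have h : nonCrossingPartitions {a} = {{{a}}} := by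
    ext π
    rw [mem_nonCrossingPartitions, mem_singleton]
    constructor
    · intro hπ
      have hV : ∀ V ∈ π, V = {a} := fun V hV =>
        (hπ.nonempty V hV).subset_singleton_iff.1 (hπ.subset V hV)
      obtain ⟨V, hVπ, -⟩ := hπ.exists_mem a (mem_singleton_self a)
      exact eq_singleton_iff_nonempty_unique_mem.2 ⟨⟨V, hVπ⟩, hV⟩
    · rintro rfl
      constructor <;> simp
  simp [blockSum, h]

lemma blockSum_mul_blockSum (hST : ∀ x ∈ S, ∀ y ∈ T, x < y) (f : Finset α → R) :
    blockSum f S * blockSum f T =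
      ∑ π ∈ nonCrossingPartitions (S ∪ T) with ∀ V ∈ π, V ⊆ S ∨ V ⊆ T, ∏ V ∈ π, f V := by
  have hdisj : Disjoint S T := Finset.disjoint_left.2 fun x hS hT => (hST x hS x hT).false
  rw [blockSum, blockSum, sum_mul_sum, ← sum_product']
  refine sum_bij' (fun p _ => p.1 ∪ p.2) (fun π _ => ({V ∈ π | V ⊆ S}, {V ∈ π | V ⊆ T}))
    ?_ ?_ ?_ ?_ ?_
  all_goals
    simp only [mem_product, mem_filter, mem_nonCrossingPartitions, and_imp, Prod.forall]
  · intro σ τ hσ hτ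
    exact ⟨hσ.union hτ hST, fun V hV => (mem_union.1 hV).imp (hσ.subset V) (hτ.subset V)⟩
  · intro π hπ hsep
    refine ⟨hπ.filter_subset subset_union_left fun V hV x hxV hxS => ?_,
      hπ.filter_subset subset_union_right fun V hV x hxV hxT => ?_⟩
    · exact (hsep V hV).resolve_right fun h => Finset.disjoint_left.1 hdisj hxS (h hxV)
    · exact (hsep V hV).resolve_left fun h => Finset.disjoint_left.1 hdisj (h hxV) hxT
  · intro σ τ hσ hτ
    refine Prod.ext (hσ.filter_subset_union hτ hdisj) ?_
    rw [union_comm]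
    exact hτ.filter_subset_union hσ hdisj.symm
  · intro π _ hsep
    rw [← filter_or, filter_true_of_mem hsep]
  · exact fun σ τ hσ hτ => (prod_union (hσ.disjoint hτ hdisj)).symm

open Classical in
lemma sum_isNextInBlock_eq_sum_joinTo (ha : ∀ x ∈ S, a < x) (hb : b ∈ S) (f : Finset α → R) :
    ∑ π ∈ nonCrossingPartitions (insert a S) with IsNextInBlock a b π, ∏ V ∈ π, f V =
      ∑ π ∈ nonCrossingPartitions S with
        ∀ V ∈ π, V ⊆ {x ∈ S | x < b} ∨ V ⊆ {x ∈ S | b ≤ x}, ∏ V ∈ π, f (joinTo a b V) := by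
  have haS : a ∉ S := fun h => (ha a h).false
  have hab : a ≠ b := (ha b hb).ne
  have erase_joinTo' : ∀ π, IsNonCrossingPartition S π → ∀ V ∈ π, (joinTo a b V).erase a = V :=
    fun π hπ V hV => erase_joinTo fun h => haS (hπ.subset V hV h)
  have joinTo_erase' : ∀ π, IsNonCrossingPartition (insert a S) π → IsNextInBlock a b π →
      ∀ V ∈ π, joinTo a b (V.erase a) = V :=
    fun π hπ hnext V hV => joinTo_erase hab (hπ.isNextInBlock_mem_iff hnext hV)
  symm
  refine sum_bij' (fun π _ => π.image (joinTo a b)) (fun π _ => π.image fun V => V.erase a)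
    ?_ ?_ ?_ ?_ ?_
  all_goals simp only [mem_filter, mem_nonCrossingPartitions, and_imp]
  · exact fun π hπ hsep => ⟨hπ.image_joinTo ha hb hsep, hπ.isNextInBlock_image_joinTo hb hsep⟩
  · exact fun π hπ hnext => ⟨hπ.image_erase haS (hπ.singleton_notMem hab hnext),
      forall_mem_image.2 fun V hV => hπ.erase_separated_of_isNextInBlock ha hnext hV⟩
  · intro π hπ _
    rw [image_image]
    exact (image_congr fun V hV => erase_joinTo' π hπ V hV).trans image_id
  · intro π hπ hnext
    rw [image_image]
    exact (image_congr fun V hV => joinTo_erase' π hπ hnext V hV).trans image_id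
  · intro π hπ _
    refine (prod_image fun V hV W hW h => ?_).symm
    rw [← erase_joinTo' π hπ V hV, h, erase_joinTo' π hπ W hW]

open Classical in
lemma sum_isNextInBlock (ha : ∀ x ∈ S, a < x) (hb : b ∈ S) (f : Finset α → R) :
    ∑ π ∈ nonCrossingPartitions (insert a S) with IsNextInBlock a b π, ∏ V ∈ π, f V =
      blockSum f {x ∈ S | x < b} * blockSum (fun V => f (joinTo a b V)) {x ∈ S | b ≤ x} := by
  have hcongr : blockSum f {x ∈ S | x < b} =
      blockSum (fun V => f (joinTo a b V)) {x ∈ S | x < b} := by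
    refine blockSum_congr fun V hV => ?_
    rw [joinTo_of_notMem fun hbV => (mem_filter.1 (hV hbV)).2.false]
  have hsplit : {x ∈ S | x < b} ∪ {x ∈ S | b ≤ x} = S := by
    rw [← filter_or, filter_true_of_mem fun x _ => lt_or_ge x b]
  rw [sum_isNextInBlock_eq_sum_joinTo ha hb, hcongr, blockSum_mul_blockSum, hsplit]
  exact fun x hx y hy => (mem_filter.1 hx).2.trans_le (mem_filter.1 hy).2

lemma sum_singleton_mem (ha : ∀ x ∈ S, a < x) (f : Finset α → R) :
    ∑ π ∈ nonCrossingPartitions (insert a S) with {a} ∈ π, ∏ V ∈ π, f V =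
      f {a} * blockSum f S := by
  rw [← blockSum_singleton f a, blockSum_mul_blockSum (by simpa using ha), ← insert_eq]
  refine sum_congr (filter_congr fun π hπ => ?_) fun _ _ => rfl
  rw [mem_nonCrossingPartitions] at hπ
  constructor
  · intro hmem V hV
    by_cases haV : a ∈ V
    · exact Or.inl (hπ.eq_of_mem_of_mem hV hmem haV (mem_singleton_self a)).subset
    · exact Or.inr ((subset_insert_iff_of_notMem haV).1 (hπ.subset V hV))
  · intro hsep
    obtain ⟨V, hV, haV⟩ := hπ.exists_mem a (mem_insert_self a S)
    have hVa : V ⊆ {a} := (hsep V hV).resolve_right fun h => (ha a (h haV)).false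
    rwa [← hVa.antisymm (singleton_subset_iff.2 haV)]

/-- Splits off the smallest point `a`: either `a` is a block by itself, or it is followed in its
block by some `b`, and then no block straddles `b` except for the one of `a`. -/
lemma blockSum_insert (ha : ∀ x ∈ S, a < x) (f : Finset α → R) :
    blockSum f (insert a S) = f {a} * blockSum f S +
      ∑ b ∈ S, blockSum f {x ∈ S | x < b} *
        blockSum (fun V => f (joinTo a b V)) {x ∈ S | b ≤ x} := by
  classical
  rw [← sum_singleton_mem ha, ← sum_congr rfl fun b hb => sum_isNextInBlock ha hb f,
    blockSum, ← sum_filter_add_sum_filter_not _ fun π => {a} ∈ π]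
  congr 1
  rw [← sum_biUnion]
  · refine sum_congr ?_ fun _ _ => rfl
    ext π
    simp only [mem_filter, mem_biUnion, mem_nonCrossingPartitions]
    constructor
    · rintro ⟨hπ, hmem⟩
      obtain ⟨b, hb, hnext⟩ := hπ.exists_isNextInBlock hmem
      exact ⟨b, hb, hπ, hnext⟩
    · rintro ⟨b, hb, hπ, hnext⟩
      exact ⟨hπ, hπ.singleton_notMem (ha b hb).ne hnext⟩
  · intro b hb c hc hbc
    refine Finset.disjoint_left.2 fun π hπb hπc => hbc ?_
    simp only [mem_filter, mem_nonCrossingPartitions] at hπb hπc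
    exact hπb.1.isNextInBlock_unique (ha b hb).ne (ha c hc).ne hπb.2 hπc.2

end NonCrossing

section FreeMoments

variable {R : Type*} [CommSemiring R] (k : ℕ → R)

lemma mem_NCP_iff {n : ℕ} {π : Finset (Finset ℕ)} :
    π ∈ NCP n ↔ IsNonCrossingPartition (Icc 1 n) π := by
  simp only [NCP, mem_filter, mem_powerset]
  constructor
  · rintro ⟨hsub, hne, hmem, hdisj, hcross⟩
    have eq_of_mem : ∀ V ∈ π, ∀ W ∈ π, ∀ x ∈ V, x ∈ W → V = W := fun V hV W hW x hxV hxW =>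
      by_contra fun h => by simpa [hdisj V hV W hW h] using mem_inter.2 ⟨hxV, hxW⟩
    refine ⟨fun V hV => mem_powerset.1 (hsub hV), hne, hmem, ?_⟩
    intro V hV W hW x₁ hx₁ y₁ hy₁ x₂ hx₂ y₂ hy₂ h₁ h₂ h₃
    rcases h₁.eq_or_lt with rfl | h₁
    · exact eq_of_mem V hV W hW _ hx₁ hx₂
    rcases h₂.eq_or_lt with rfl | h₂
    · exact eq_of_mem V hV W hW _ hy₁ hx₂
    rcases h₃.eq_or_lt with rfl | h₃
    · exact eq_of_mem V hV W hW _ hy₁ hy₂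
    by_contra h
    exact hcross ⟨V, hV, W, hW, h, x₁, hx₁, y₁, hy₁, x₂, hx₂, y₂, hy₂, h₁, h₂, h₃⟩
  · intro hπ
    refine ⟨fun V hV => mem_powerset.2 (hπ.subset V hV), hπ.nonempty, hπ.exists_mem, ?_, ?_⟩
    · exact fun V hV W hW h => disjoint_iff_inter_eq_empty.1 <| Finset.disjoint_left.2
        fun x hxV hxW => h (hπ.eq_of_mem_of_mem hV hW hxV hxW)
    · rintro ⟨V, hV, W, hW, h, x₁, hx₁, y₁, hy₁, x₂, hx₂, y₂, hy₂, h₁, h₂, h₃⟩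
      exact h (hπ.eq_of_interlaced V hV W hW x₁ hx₁ y₁ hy₁ x₂ hx₂ y₂ hy₂ h₁.le h₂.le h₃.le)

/-- The sum over the non-crossing partitions of the integer interval `[a, a + n)` in which the
block of `a` counts `s` additional elements. -/
def extendedBlockSum (s a n : ℕ) : R :=
  blockSum (fun V => k (#V + if a ∈ V then s else 0)) (Ico a (a + n))

lemma extendedBlockSum_succ (s a n : ℕ) :
    extendedBlockSum k s a (n + 1) = k (s + 1) * extendedBlockSum k 0 (a + 1) n +
      ∑ j ∈ range n, extendedBlockSum k 0 (a + 1) j *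
        extendedBlockSum k (s + 1) (a + 1 + j) (n - j) := by
  have hIco : Ico a (a + (n + 1)) = insert a (Ico (a + 1) (a + 1 + n)) := by
    rw [insert_Ico_add_one_left_eq_Ico (by omega), add_right_comm, add_assoc]
  have ha : ∀ x ∈ Ico (a + 1) (a + 1 + n), a < x := fun x hx => (mem_Ico.1 hx).1
  rw [extendedBlockSum, hIco, blockSum_insert ha]
  congr 1
  · congr 1
    · simp [add_comm]
    · exact blockSum_congr fun V hV => by
        have haV : a ∉ V := fun h => (ha a (hV h)).false
        simp only [haV, if_false, ite_self, add_zero]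
  rw [sum_Ico_eq_sum_range, Nat.add_sub_cancel_left]
  refine sum_congr rfl fun j hj => ?_
  have hjn : j < n := mem_range.1 hj
  congr 1
  · have hlt : {x ∈ Ico (a + 1) (a + 1 + n) | x < a + 1 + j} = Ico (a + 1) (a + 1 + j) := by
      grind
    rw [hlt]
    exact blockSum_congr fun V hV => by
      have haV : a ∉ V := fun h => by simpa using hV h
      simp only [haV, if_false, ite_self, add_zero]
  · have hge : {x ∈ Ico (a + 1) (a + 1 + n) | a + 1 + j ≤ x} =
        Ico (a + 1 + j) (a + 1 + j + (n - j)) := by grind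
    rw [hge]
    refine blockSum_congr fun V hV => ?_
    have haV : a ∉ V := fun h => by have := mem_Ico.1 (hV h); omega
    by_cases hb : a + 1 + j ∈ V
    · simp only [joinTo, hb, if_true, card_insert_of_notMem haV, mem_insert_self]
      rw [add_assoc, add_comm 1 s]
    · simp only [joinTo, hb, haV, if_false]

lemma extendedBlockSum_eq (n : ℕ) :
    ∀ s a b, extendedBlockSum k s a n = extendedBlockSum k s b n := by
  induction n using Nat.strong_induction_on with
  | _ n ih =>
    intro s a b
    rcases n with _ | n
    · simp [extendedBlockSum]
    rw [extendedBlockSum_succ, extendedBlockSum_succ, ih n n.lt_succ_self 0 (a + 1) (b + 1)]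
    congr 1
    refine sum_congr rfl fun j hj => ?_
    rw [mem_range] at hj
    rw [ih j (by omega) 0 (a + 1) (b + 1), ih (n - j) (by omega) (s + 1) (a + 1 + j) (b + 1 + j)]

/-- The moment sequence with free cumulants `k`. -/
def freeMoment (n : ℕ) : R := ∑ π ∈ NCP n, ∏ V ∈ π, k #V

/-- The variant of `freeMoment k (n + 1)` in which the block of `1` counts `s` additional
elements. -/
def openFreeMoment (s n : ℕ) : R := extendedBlockSum k s 1 (n + 1)

lemma extendedBlockSum_zero_left (a n : ℕ) : extendedBlockSum k 0 a n = freeMoment k n := by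
  have h : NCP n = nonCrossingPartitions (Ico 1 (1 + n)) := by
    ext π
    rw [mem_NCP_iff, mem_nonCrossingPartitions, add_comm 1 n, Ico_add_one_right_eq_Icc]
  rw [extendedBlockSum_eq k n 0 a 1, freeMoment, h]
  simp only [extendedBlockSum, blockSum, ite_self, add_zero]

@[simp]
lemma freeMoment_zero : freeMoment k 0 = 1 := by
  simp [← extendedBlockSum_zero_left k 0, extendedBlockSum]

lemma freeMoment_succ (n : ℕ) : freeMoment k (n + 1) = openFreeMoment k 0 n :=
  (extendedBlockSum_zero_left k 1 (n + 1)).symm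

lemma openFreeMoment_zero (s : ℕ) : openFreeMoment k s 0 = k (s + 1) := by
  simp [openFreeMoment, extendedBlockSum, add_comm]

lemma openFreeMoment_succ (s n : ℕ) :
    openFreeMoment k s (n + 1) = k (s + 1) * freeMoment k (n + 1) +
      ∑ ij ∈ antidiagonal n, freeMoment k ij.1 * openFreeMoment k (s + 1) ij.2 := by
  rw [openFreeMoment, extendedBlockSum_succ, extendedBlockSum_zero_left,
    Nat.sum_antidiagonal_eq_sum_range_succ fun i j => freeMoment k i * openFreeMoment k (s + 1) j]
  congr 1
  refine sum_congr rfl fun j hj => ?_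
  rw [extendedBlockSum_zero_left, openFreeMoment, extendedBlockSum_eq k _ _ _ 1,
    Nat.succ_sub (mem_range_succ_iff.1 hj)]

end FreeMoments

section Dilation

variable {R : Type*} [CommSemiring R] (k : ℕ → R) (z : R)

lemma openFreeMoment_pow_mul (s n : ℕ) :
    openFreeMoment (fun j => z ^ j * k j) s n = z ^ (s + n + 1) * openFreeMoment k s n := by
  induction n using Nat.strong_induction_on generalizing s with
  | _ n ih =>
    rcases n with _ | n
    · simp only [openFreeMoment_zero, add_zero]
    have freeMoment_ih : ∀ i ≤ n + 1,
        freeMoment (fun j => z ^ j * k j) i = z ^ i * freeMoment k i := by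
      rintro (_ | i) hi
      · simp
      · rw [freeMoment_succ, freeMoment_succ, ih i (by omega), zero_add]
    rw [openFreeMoment_succ, openFreeMoment_succ, freeMoment_ih _ le_rfl, mul_add, mul_sum]
    congr 1
    · ring
    refine sum_congr rfl fun ij hij => ?_
    obtain rfl := HasAntidiagonal.mem_antidiagonal.1 hij
    rw [freeMoment_ih _ (by omega), ih _ (by omega)]
    ring

lemma freeMoment_pow_mul (n : ℕ) :
    freeMoment (fun j => z ^ j * k j) n = z ^ n * freeMoment k n := by
  rcases n with _ | n
  · simp
  · rw [freeMoment_succ, freeMoment_succ, openFreeMoment_pow_mul, zero_add]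

end Dilation

section GeneratingFunctions

lemma sum_range_antidiagonal_le {f g : ℕ → ℝ} (hf : ∀ i, 0 ≤ f i) (hg : ∀ i, 0 ≤ g i) (n : ℕ) :
    ∑ m ∈ range n, ∑ ij ∈ antidiagonal m, f ij.1 * g ij.2 ≤
      (∑ i ∈ range n, f i) * ∑ i ∈ range n, g i := by
  have hfiber : ∀ m ∈ range n,
      antidiagonal m = {ij ∈ range n ×ˢ range n | ij.1 + ij.2 = m} := fun m hm => by
    ext ij
    simp only [HasAntidiagonal.mem_antidiagonal, mem_filter, mem_product, mem_range] at hm ⊢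
    omega
  rw [sum_mul_sum, ← sum_product', sum_congr rfl fun m hm => by rw [hfiber m hm]]
  exact sum_fiberwise_le_sum_of_sum_fiber_nonneg fun m _ =>
    sum_nonneg fun ij _ => mul_nonneg (hf ij.1) (hg ij.2)

lemma sum_Icc_one_eq_sum_range {M : Type*} [AddCommMonoid M] (f : ℕ → M) (n : ℕ) :
    ∑ i ∈ Icc 1 n, f i = ∑ i ∈ range n, f (i + 1) := by
  rw [range_eq_Ico, sum_Ico_add' f 0 n 1, zero_add, Ico_add_one_right_eq_Icc]

variable {k : ℕ → ℝ}

lemma openFreeMoment_nonneg (hk : ∀ j, 1 ≤ j → 0 ≤ k j) (s n : ℕ) : 0 ≤ openFreeMoment k s n := by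
  rw [openFreeMoment, extendedBlockSum, blockSum]
  exact sum_nonneg fun π hπ => prod_nonneg fun V hV => hk _ <| le_add_right <|
    card_pos.2 ((mem_nonCrossingPartitions.1 hπ).nonempty V hV)

lemma freeMoment_nonneg (hk : ∀ j, 1 ≤ j → 0 ≤ k j) (n : ℕ) : 0 ≤ freeMoment k n := by
  rcases n with _ | n
  · simp
  · exact freeMoment_succ k n ▸ openFreeMoment_nonneg hk 0 n

lemma sum_range_openFreeMoment_succ_le (hk : ∀ j, 1 ≤ j → 0 ≤ k j) (s n : ℕ) :
    ∑ i ∈ range (n + 1), openFreeMoment k s i ≤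
      k (s + 1) * ∑ i ∈ range (n + 1), freeMoment k i +
        (∑ i ∈ range n, freeMoment k i) * ∑ i ∈ range n, openFreeMoment k (s + 1) i := by
  have hprod := sum_range_antidiagonal_le (freeMoment_nonneg hk)
    (openFreeMoment_nonneg hk (s + 1)) n
  simp only [sum_range_succ', openFreeMoment_succ, openFreeMoment_zero, freeMoment_zero,
    sum_add_distrib, ← mul_sum]
  linarith

lemma sum_range_openFreeMoment_le (hk : ∀ j, 1 ≤ j → 0 ≤ k j) {x : ℝ} {n : ℕ}
    (hx : ∑ i ∈ range n, freeMoment k i ≤ x) (s : ℕ) :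
    ∑ i ∈ range n, openFreeMoment k s i ≤ ∑ t ∈ range n, k (s + t + 1) * x ^ (t + 1) := by
  induction n generalizing s with
  | zero => simp
  | succ n ih =>
    have hx' : ∑ i ∈ range n, freeMoment k i ≤ x :=
      (sum_le_sum_of_subset_of_nonneg (range_mono n.le_succ)
        fun i _ _ => freeMoment_nonneg hk i).trans hx
    have hx0 : 0 ≤ x := (sum_nonneg fun i _ => freeMoment_nonneg hk i).trans hx
    calc
      _ ≤ _ := sum_range_openFreeMoment_succ_le hk s n
      _ ≤ k (s + 1) * x + x * ∑ t ∈ range n, k (s + 1 + t + 1) * x ^ (t + 1) := by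
        exact add_le_add (mul_le_mul_of_nonneg_left hx (hk _ s.succ_pos)) <|
          mul_le_mul hx' (ih hx' (s + 1)) (sum_nonneg fun i _ => openFreeMoment_nonneg hk _ _) hx0
      _ = _ := by
        rw [sum_range_succ', mul_sum, add_comm]
        congr 1
        · exact sum_congr rfl fun t _ => by rw [add_right_comm s 1 t]; ring_nf
        · simp

lemma sum_range_freeMoment_le (hk : ∀ j, 1 ≤ j → 0 ≤ k j) {x : ℝ}
    (hx : ∀ N, 1 + ∑ n ∈ Icc 1 N, k n * x ^ n ≤ x) (n : ℕ) :
    ∑ i ∈ range n, freeMoment k i ≤ x := by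
  induction n with
  | zero =>
    have := hx 0
    simp only [Icc_eq_empty_of_lt, zero_lt_one, sum_empty, range_zero] at this ⊢
    linarith
  | succ n ih =>
    have hopen := sum_range_openFreeMoment_le hk ih 0
    have hxn := hx n
    simp only [zero_add, sum_Icc_one_eq_sum_range] at hopen hxn
    simp only [sum_range_succ', freeMoment_succ, freeMoment_zero]
    linarith

lemma openFreeMoment_succ_left_le (hk : ∀ j, 1 ≤ j → 0 ≤ k j) (s n : ℕ) :
    openFreeMoment k (s + 1) n ≤ openFreeMoment k s (n + 1) := by
  have hmem : (0, n) ∈ antidiagonal n := by simp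
  have hle := single_le_sum (f := fun ij : ℕ × ℕ =>
    freeMoment k ij.1 * openFreeMoment k (s + 1) ij.2)
    (fun ij _ => mul_nonneg (freeMoment_nonneg hk _) (openFreeMoment_nonneg hk _ _)) hmem
  rw [freeMoment_zero, one_mul] at hle
  rw [openFreeMoment_succ]
  exact hle.trans (le_add_of_nonneg_left (mul_nonneg (hk _ s.succ_pos) (freeMoment_nonneg hk _)))

lemma summable_openFreeMoment (hk : ∀ j, 1 ≤ j → 0 ≤ k j) (hs : Summable (freeMoment k)) (s : ℕ) :
    Summable (openFreeMoment k s) := by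
  induction s with
  | zero => exact ((summable_nat_add_iff 1).2 hs).congr (freeMoment_succ k)
  | succ s ih =>
    exact Summable.of_nonneg_of_le (openFreeMoment_nonneg hk _) (openFreeMoment_succ_left_le hk s)
      ((summable_nat_add_iff 1).2 ih)

lemma tsum_openFreeMoment (hk : ∀ j, 1 ≤ j → 0 ≤ k j) (hs : Summable (freeMoment k)) (s : ℕ) :
    ∑' n, openFreeMoment k s n = k (s + 1) * ∑' n, freeMoment k n +
      (∑' n, freeMoment k n) * ∑' n, openFreeMoment k (s + 1) n := by
  have hopen := summable_openFreeMoment hk hs (s + 1)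
  have hprod := (summable_norm_sum_mul_antidiagonal_of_summable_norm hs.norm hopen.norm).of_norm
  have htail : Summable fun n => k (s + 1) * freeMoment k (n + 1) :=
    ((summable_nat_add_iff 1).2 hs).mul_left _
  rw [tsum_mul_tsum_eq_tsum_sum_antidiagonal_of_summable_norm hs.norm hopen.norm,
    (summable_openFreeMoment hk hs s).tsum_eq_zero_add, hs.tsum_eq_zero_add]
  simp only [openFreeMoment_zero, openFreeMoment_succ, freeMoment_zero]
  rw [htail.tsum_add hprod, tsum_mul_left]
  ring

lemma sum_range_le_tsum_openFreeMoment (hk : ∀ j, 1 ≤ j → 0 ≤ k j) (hs : Summable (freeMoment k))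
    (N s : ℕ) :
    ∑ t ∈ range N, k (s + t + 1) * (∑' n, freeMoment k n) ^ (t + 1) ≤
      ∑' n, openFreeMoment k s n := by
  set M := ∑' n, freeMoment k n
  have hM0 : 0 ≤ M := tsum_nonneg (freeMoment_nonneg hk)
  induction N generalizing s with
  | zero => simpa using tsum_nonneg (openFreeMoment_nonneg hk s)
  | succ N ih =>
    calc
      _ = k (s + 1) * M + M * ∑ t ∈ range N, k (s + 1 + t + 1) * M ^ (t + 1) := by
        rw [sum_range_succ', mul_sum, add_comm]
        congr 1
        · simp
        · exact sum_congr rfl fun t _ => by rw [add_right_comm s 1 t]; ring_nf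
      _ ≤ k (s + 1) * M + M * ∑' n, openFreeMoment k (s + 1) n := by
        gcongr
        exact ih (s + 1)
      _ = _ := (tsum_openFreeMoment hk hs s).symm

lemma one_add_sum_le_tsum_freeMoment (hk : ∀ j, 1 ≤ j → 0 ≤ k j) (hs : Summable (freeMoment k))
    (N : ℕ) :
    1 + ∑ n ∈ Icc 1 N, k n * (∑' i, freeMoment k i) ^ n ≤ ∑' i, freeMoment k i := by
  have hle := sum_range_le_tsum_openFreeMoment hk hs N 0
  have htail : ∑' i, freeMoment k i = 1 + ∑' i, openFreeMoment k 0 i := by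
    simp only [hs.tsum_eq_zero_add, freeMoment_zero, freeMoment_succ]
  simp only [zero_add] at hle
  rw [sum_Icc_one_eq_sum_range]
  linarith

/-- `r` dominates `K(w) = 1 / w + R(w)`, `R` being the R-transform with coefficients `k`, at some
`w > 0`. The partial sums of the series are bounded rather than its `tsum`, which is `0` when the
series diverges. -/
def DominatesKTransform (k : ℕ → ℝ) (r : ℝ) : Prop :=
  ∃ w, 0 < w ∧ ∀ N, 1 + ∑ n ∈ Icc 1 N, k n * w ^ n ≤ r * w

lemma dominatesKTransform_of_freeMoment_le (hk : ∀ j, 1 ≤ j → 0 ≤ k j) {r r' : ℝ} (hr' : 0 ≤ r')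
    (h : ∀ n, freeMoment k n ≤ r' ^ n) (hlt : r' < r) : DominatesKTransform k r := by
  have hr : 0 < r := hr'.trans_lt hlt
  have hkz : ∀ j, 1 ≤ j → 0 ≤ r⁻¹ ^ j * k j := fun j hj => mul_nonneg (by positivity) (hk j hj)
  have hs : Summable (freeMoment fun j => r⁻¹ ^ j * k j) := by
    refine .of_nonneg_of_le (freeMoment_nonneg hkz) (fun n => ?_)
      (summable_geometric_of_lt_one (r := r⁻¹ * r') (by positivity) ?_)
    · rw [freeMoment_pow_mul, mul_pow]
      exact mul_le_mul_of_nonneg_left (h n) (by positivity)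
    · rwa [inv_mul_lt_one₀ hr]
  have hM := one_add_sum_le_tsum_freeMoment hkz hs
  set M := ∑' i, freeMoment (fun j => r⁻¹ ^ j * k j) i
  have hM0 : 1 ≤ M := by simpa using hM 0
  refine ⟨r⁻¹ * M, by positivity, fun N => ?_⟩
  rw [mul_inv_cancel_left₀ hr.ne']
  simpa only [mul_pow, mul_assoc, mul_left_comm] using hM N

lemma DominatesKTransform.pos {r : ℝ} (h : DominatesKTransform k r) : 0 < r := by
  obtain ⟨w, hw, hle⟩ := h
  exact pos_of_mul_pos_left (zero_lt_one.trans_le (by simpa using hle 0)) hw.le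

lemma DominatesKTransform.freeMoment_le (hk : ∀ j, 1 ≤ j → 0 ≤ k j) {r : ℝ}
    (h : DominatesKTransform k r) : ∃ C, ∀ n, freeMoment k n ≤ C * r ^ n := by
  have hr := h.pos
  obtain ⟨w, -, hle⟩ := h
  have hkz : ∀ j, 1 ≤ j → 0 ≤ r⁻¹ ^ j * k j := fun j hj => mul_nonneg (by positivity) (hk j hj)
  have hx : ∀ N, 1 + ∑ n ∈ Icc 1 N, r⁻¹ ^ n * k n * (r * w) ^ n ≤ r * w := fun N => by
    refine le_of_eq_of_le ?_ (hle N)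
    congr 1
    refine sum_congr rfl fun n _ => ?_
    rw [mul_right_comm, ← mul_pow, inv_mul_cancel_left₀ hr.ne', mul_comm]
  refine ⟨r * w, fun n => ?_⟩
  have hn := (single_le_sum (fun i _ => freeMoment_nonneg hkz i) (self_mem_range_succ n)).trans
    (sum_range_freeMoment_le hkz hx (n + 1))
  rwa [freeMoment_pow_mul, inv_pow, inv_mul_le_iff₀ (by positivity), mul_comm] at hn

end GeneratingFunctions

section SupportEdge

variable {μ : Measure ℝ}

lemma integrable_pow_of_ae_le [IsFiniteMeasure μ] {r : ℝ} (h0 : ∀ᵐ t ∂μ, 0 ≤ t)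
    (hr : ∀ᵐ t ∂μ, t ≤ r) (n : ℕ) : Integrable (fun t => t ^ n) μ := by
  refine .of_bound (by fun_prop) (r ^ n) ?_
  filter_upwards [h0, hr] with t ht htr
  rw [Real.norm_of_nonneg (pow_nonneg ht n)]
  exact pow_le_pow_left₀ ht htr n

lemma integral_pow_le_pow [IsProbabilityMeasure μ] {r : ℝ} (h0 : ∀ᵐ t ∂μ, 0 ≤ t)
    (hr : ∀ᵐ t ∂μ, t ≤ r) (n : ℕ) : ∫ t, t ^ n ∂μ ≤ r ^ n := by
  have hmono : ∫ t, t ^ n ∂μ ≤ ∫ _, r ^ n ∂μ := by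
    refine integral_mono_ae (integrable_pow_of_ae_le h0 hr n) (integrable_const _) ?_
    filter_upwards [h0, hr] with t ht htr using pow_le_pow_left₀ ht htr n
  simpa using hmono

lemma measure_Ioi_eq_zero_of_integral_pow_le [IsFiniteMeasure μ] {C s r : ℝ}
    (h0 : ∀ᵐ t ∂μ, 0 ≤ t) (hint : ∀ n : ℕ, Integrable (fun t => t ^ n) μ) (hs : 0 ≤ s)
    (hle : ∀ n : ℕ, ∫ t, t ^ n ∂μ ≤ C * s ^ n) (hsr : s < r) : μ (Set.Ioi r) = 0 := by
  have hr : 0 < r := hs.trans_lt hsr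
  have hmarkov (n : ℕ) : μ.real (Set.Ioi r) ≤ C * (s / r) ^ n := by
    have hsub : μ.real (Set.Ioi r) ≤ μ.real {t | r ^ n ≤ t ^ n} :=
      measureReal_mono fun t ht => pow_le_pow_left₀ hr.le (le_of_lt ht) n
    rw [div_pow, ← mul_div_assoc, le_div_iff₀ (by positivity), mul_comm]
    calc
      r ^ n * μ.real (Set.Ioi r) ≤ r ^ n * μ.real {t | r ^ n ≤ t ^ n} := by gcongr
      _ ≤ ∫ t, t ^ n ∂μ := mul_meas_ge_le_integral_of_nonneg
        (by filter_upwards [h0] with t ht using pow_nonneg ht n) (hint n) (r ^ n)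
      _ ≤ C * s ^ n := hle n
  have hlim : Filter.Tendsto (fun n : ℕ => C * (s / r) ^ n) Filter.atTop (nhds 0) := by
    simpa using (tendsto_pow_atTop_nhds_zero_of_lt_one (by positivity)
      ((div_lt_one hr).2 hsr)).const_mul C
  have hzero := le_antisymm (ge_of_tendsto' hlim hmarkov) measureReal_nonneg
  rwa [measureReal_eq_zero_iff] at hzero

lemma isGLB_dominatesKTransform [IsProbabilityMeasure μ] (hnonneg : μ (Set.Iio 0) = 0)
    (hcpt : ∃ r, μ (Set.Ioi r) = 0) {k : ℕ → ℝ} (hk : ∀ j, 1 ≤ j → 0 ≤ k j)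
    (hmoment : ∀ n : ℕ, ∫ t, t ^ n ∂μ = freeMoment k n) :
    IsGLB {r | DominatesKTransform k r} (sInf {r | μ (Set.Ioi r) = 0}) := by
  have h0 : ∀ᵐ t ∂μ, 0 ≤ t :=
    (measure_eq_zero_iff_ae_notMem.1 hnonneg).mono fun _ ht => not_lt.1 ht
  have hae {r : ℝ} (hr : μ (Set.Ioi r) = 0) : ∀ᵐ t ∂μ, t ≤ r :=
    (measure_eq_zero_iff_ae_notMem.1 hr).mono fun _ ht => not_lt.1 ht
  have hr0 {r : ℝ} (hr : μ (Set.Ioi r) = 0) : 0 ≤ r :=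
    let ⟨_, ht0, htr⟩ := (h0.and (hae hr)).exists
    ht0.trans htr
  constructor
  · refine fun r hr => le_of_forall_gt_imp_ge_of_dense fun r' hlt => csInf_le ⟨0, fun _ => hr0⟩ ?_
    obtain ⟨C, hC⟩ := hr.freeMoment_le hk
    exact measure_Ioi_eq_zero_of_integral_pow_le h0
      (integrable_pow_of_ae_le h0 (hae hcpt.choose_spec)) (hr.pos).le
      (fun n => (hmoment n).trans_le (hC n)) hlt
  · refine fun b hb => le_of_forall_gt_imp_ge_of_dense fun r hlt => hb ?_
    obtain ⟨r', hr', hlt'⟩ := exists_lt_of_csInf_lt hcpt hlt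
    exact dominatesKTransform_of_freeMoment_le hk (hr0 hr')
      (fun n => hmoment n ▸ integral_pow_le_pow h0 (hae hr') n) hlt'

end SupportEdge

section Variational

lemma tsum_mul_log_div_le_log_tsum {ι : Type*} {p q : ι → ℝ} (hp : ∀ i, 0 ≤ p i)
    (hp1 : HasSum p 1) (hq : ∀ i, 0 ≤ q i) (hpq : ∀ i, 0 < p i → 0 < q i) (hqs : Summable q)
    (hs : Summable fun i => p i * Real.log (q i / p i)) :
    ∑' i, p i * Real.log (q i / p i) ≤ Real.log (∑' i, q i) := by
  set Q := ∑' i, q i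
  have hQ : 0 < Q := by
    obtain ⟨i, hi⟩ : ∃ i, 0 < p i := by
      by_contra! h
      exact one_ne_zero <| hp1.unique <| hasSum_zero.congr_fun fun i => (h i).antisymm (hp i)
    exact hqs.tsum_pos hq i (hpq i hi)
  have hpointwise (i : ι) :
      p i * Real.log (q i / p i) - Real.log Q * p i ≤ Q⁻¹ * q i - p i := by
    rcases (hp i).eq_or_lt with hi | hi
    · simpa [← hi] using mul_nonneg (inv_nonneg.2 hQ.le) (hq i)
    have hqi := hpq i hi
    calc
      _ = p i * Real.log (q i / p i / Q) := by
        rw [Real.log_div (by positivity) hQ.ne']; ring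
      _ ≤ p i * (q i / p i / Q - 1) :=
        mul_le_mul_of_nonneg_left (Real.log_le_sub_one_of_pos (by positivity)) hi.le
      _ = _ := by field_simp
  have hle := hasSum_le hpointwise (hs.hasSum.sub (hp1.mul_left _))
    ((hqs.hasSum.mul_left Q⁻¹).sub hp1)
  rw [inv_mul_cancel₀ hQ.ne'] at hle
  linarith

lemma log_add_Theta_le {m x : ℝ} (hm : 1 ≤ m) (hx : 0 < x) :
    Real.log x + Theta m ≤ m * Real.log (1 + x) := by
  rcases hm.eq_or_lt with rfl | hm
  · simpa [Theta] using Real.log_le_log hx (by linarith)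
  have hm0 : 0 < m := one_pos.trans hm
  have hm' : 0 < m - 1 := sub_pos.2 hm
  -- `1 + x` is the mean of `m / (m - 1)` and `m * x` with weights `(m - 1) / m` and `1 / m`.
  have hconcave := strictConcaveOn_log_Ioi.concaveOn.2
    (Set.mem_Ioi.2 (by positivity : 0 < m / (m - 1))) (Set.mem_Ioi.2 (by positivity : 0 < m * x))
    (by positivity : 0 ≤ (m - 1) / m) (by positivity : 0 ≤ 1 / m) (by field_simp; ring)
  have hmean : (m - 1) / m * (m / (m - 1)) + 1 / m * (m * x) = 1 + x := by field_simp
  have hlog : Real.log (1 - m⁻¹) = Real.log (m - 1) - Real.log m := by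
    rw [← Real.log_div hm'.ne' hm0.ne']
    congr 1
    field_simp
  rw [smul_eq_mul, smul_eq_mul, smul_eq_mul, smul_eq_mul, hmean, Real.log_div hm0.ne' hm'.ne',
    Real.log_mul hm0.ne' hx.ne'] at hconcave
  calc
    _ = m * ((m - 1) / m * (Real.log m - Real.log (m - 1)) +
        1 / m * (Real.log m + Real.log x)) := by
      rw [Theta, hlog]
      field_simp
      ring
    _ ≤ _ := mul_le_mul_of_nonneg_left hconcave hm0.le

variable {k p : ℕ → ℝ}

/-- `p` is a probability measure on `{1, 2, …}` with finite mean, whose entropy relative to `k` is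
given by a convergent series. -/
structure IsAdmissible (k p : ℕ → ℝ) : Prop where
  nonneg : ∀ n, 0 ≤ p n
  zero : p 0 = 0
  hasSum_one : HasSum p 1
  summable_mean : Summable fun n : ℕ => (n : ℝ) * p n
  summable_entropy : Summable fun n : ℕ => p n * Real.log (k n / p n)

/-- The functional `(1 / m) ∑ p_n log (k_n / p_n) + Θ(m) / m`, `m` being the mean of `p`, that the
variational formula maximises. -/
def growthRate (k p : ℕ → ℝ) : ℝ :=
  (∑' n : ℕ, (n : ℝ) * p n)⁻¹ * (∑' n : ℕ, p n * Real.log (k n / p n)) +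
    Theta (∑' n : ℕ, (n : ℝ) * p n) / ∑' n : ℕ, (n : ℝ) * p n

lemma IsAdmissible.one_le_mean (hp : IsAdmissible k p) : 1 ≤ ∑' n : ℕ, (n : ℝ) * p n := by
  refine hp.hasSum_one.tsum_eq ▸ hp.hasSum_one.summable.tsum_le_tsum (fun n => ?_) hp.summable_mean
  rcases n with _ | n
  · simp [hp.zero]
  · exact le_mul_of_one_le_left (hp.nonneg _) (by simp)

lemma IsAdmissible.pos_index (hp : IsAdmissible k p) {n : ℕ} (hn : 0 < p n) : 1 ≤ n :=
  Nat.one_le_iff_ne_zero.2 fun h => (h ▸ hn).ne' hp.zero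

lemma IsAdmissible.hasSum_mul_log_mul_pow_div (hp : IsAdmissible k p)
    (hk : ∀ j, 1 ≤ j → 0 < k j) {w : ℝ} (hw : 0 < w) :
    HasSum (fun n => p n * Real.log (k n * w ^ n / p n))
      (∑' n, p n * Real.log (k n / p n) + Real.log w * ∑' n : ℕ, (n : ℝ) * p n) := by
  refine (hp.summable_entropy.hasSum.add (hp.summable_mean.hasSum.mul_left (Real.log w))).congr_fun
    fun n => ?_
  rcases (hp.nonneg n).eq_or_lt with hn | hn
  · simp [← hn]
  have hkn := hk n (hp.pos_index hn)
  rw [mul_div_right_comm, Real.log_mul (by positivity) (by positivity), Real.log_pow]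
  ring

lemma IsAdmissible.entropy_add_le_log (hp : IsAdmissible k p) (hk : ∀ j, 1 ≤ j → 0 < k j)
    {w x : ℝ} (hw : 0 < w) (hx : ∀ N, ∑ n ∈ Icc 1 N, k n * w ^ n ≤ x) :
    ∑' n, p n * Real.log (k n / p n) + Real.log w * ∑' n : ℕ, (n : ℝ) * p n ≤ Real.log x := by
  have hq (n : ℕ) : 0 < k (n + 1) * w ^ (n + 1) := mul_pos (hk _ n.succ_pos) (by positivity)
  simp only [sum_Icc_one_eq_sum_range] at hx
  have hqs : Summable fun n => k (n + 1) * w ^ (n + 1) :=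
    summable_of_sum_range_le (fun n => (hq n).le) hx
  have hp1 : HasSum (fun n => p (n + 1)) 1 := by
    simpa [hp.zero] using (hasSum_nat_add_iff' 1).2 hp.hasSum_one
  have hentropy := (hasSum_nat_add_iff' 1).2 (hp.hasSum_mul_log_mul_pow_div hk hw)
  rw [sum_range_one, hp.zero, zero_mul, sub_zero] at hentropy
  calc
    _ = _ := hentropy.tsum_eq.symm
    _ ≤ Real.log (∑' n, k (n + 1) * w ^ (n + 1)) :=
      tsum_mul_log_div_le_log_tsum (fun n => hp.nonneg _) hp1 (fun n => (hq n).le)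
        (fun n _ => hq n) hqs hentropy.summable
    _ ≤ Real.log x := Real.log_le_log (hqs.tsum_pos (fun n => (hq n).le) 0 (hq 0))
      (hqs.tsum_le_of_sum_range_le hx)

lemma growthRate_le_log (hk : ∀ j, 1 ≤ j → 0 < k j) (hp : IsAdmissible k p) {r : ℝ}
    (hr : DominatesKTransform k r) : growthRate k p ≤ Real.log r := by
  have hr0 := hr.pos
  obtain ⟨w, hw, hle⟩ := hr
  have hx (N : ℕ) : ∑ n ∈ Icc 1 N, k n * w ^ n ≤ r * w - 1 := le_sub_iff_add_le'.2 (hle N)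
  have hx0 : 0 < r * w - 1 :=
    (mul_pos (hk 1 le_rfl) (pow_pos hw 1)).trans_le (by simpa using hx 1)
  have hm := hp.one_le_mean
  have hentropy := hp.entropy_add_le_log hk hw hx
  have hTheta := log_add_Theta_le hm hx0
  rw [add_sub_cancel, Real.log_mul hr0.ne' hw.ne'] at hTheta
  rw [growthRate, inv_mul_eq_div, ← add_div, div_le_iff₀ (by linarith)]
  linarith

/-- The Gibbs measure on `S` with weights `k n * w ^ n`. -/
def gibbsWeight (k : ℕ → ℝ) (S : Finset ℕ) (w : ℝ) (n : ℕ) : ℝ :=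
  if n ∈ S then k n * w ^ n / ∑ j ∈ S, k j * w ^ j else 0

variable {S : Finset ℕ} {w : ℝ}

lemma sum_mul_pow_pos (hw : 0 < w) (hk : ∀ n ∈ S, 0 < k n) (hS : S.Nonempty) :
    0 < ∑ n ∈ S, k n * w ^ n :=
  sum_pos (fun n hn => mul_pos (hk n hn) (pow_pos hw n)) hS

lemma hasSum_mul_gibbsWeight (f : ℕ → ℝ) :
    HasSum (fun n => f n * gibbsWeight k S w n)
      ((∑ n ∈ S, f n * (k n * w ^ n)) / ∑ n ∈ S, k n * w ^ n) := by
  have hsum : (∑ n ∈ S, f n * (k n * w ^ n)) / ∑ n ∈ S, k n * w ^ n =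
      ∑ n ∈ S, f n * gibbsWeight k S w n := by
    rw [sum_div]
    exact sum_congr rfl fun n hn => by rw [gibbsWeight, if_pos hn, mul_div_assoc]
  rw [hsum]
  exact hasSum_sum_of_ne_finset_zero fun n hn => by rw [gibbsWeight, if_neg hn, mul_zero]

lemma gibbsWeight_mul_log_div (hw : 0 < w) (hk : ∀ n ∈ S, 0 < k n) (n : ℕ) :
    gibbsWeight k S w n * Real.log (k n / gibbsWeight k S w n) =
      (Real.log (∑ j ∈ S, k j * w ^ j) - Real.log w * n) * gibbsWeight k S w n := by
  rw [gibbsWeight]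
  split_ifs with hn
  · have hx := sum_mul_pow_pos hw hk ⟨n, hn⟩
    have hkn := hk n hn
    rw [div_div_eq_mul_div, mul_div_mul_left _ _ hkn.ne', Real.log_div hx.ne' (by positivity),
      Real.log_pow]
    ring
  · simp

lemma isAdmissible_gibbsWeight (hw : 0 < w) (hk : ∀ n ∈ S, 0 < k n) (h0 : 0 ∉ S)
    (hS : S.Nonempty) : IsAdmissible k (gibbsWeight k S w) where
  nonneg n := by
    rw [gibbsWeight]
    split_ifs with hn
    · exact div_nonneg (mul_pos (hk n hn) (pow_pos hw n)).le (sum_mul_pow_pos hw hk hS).le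
    · exact le_rfl
  zero := if_neg h0
  hasSum_one := by
    have hx := sum_mul_pow_pos hw hk hS
    simpa [hx.ne'] using hasSum_mul_gibbsWeight (k := k) (S := S) (w := w) 1
  summable_mean := (hasSum_mul_gibbsWeight _).summable
  summable_entropy := by
    simp only [gibbsWeight_mul_log_div hw hk]
    exact (hasSum_mul_gibbsWeight _).summable

/-- The constraint on `w` makes `x = ∑ n ∈ S, k n * w ^ n` and the mean `m` of the Gibbs measure
satisfy `m * x = 1 + x`, the case of equality in `log_add_Theta_le`. -/
lemma growthRate_gibbsWeight (hw : 0 < w) (hk : ∀ n ∈ S, 0 < k n) (hS : S.Nonempty)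
    (hcrit : ∑ n ∈ S, ((n : ℝ) - 1) * (k n * w ^ n) = 1) :
    growthRate k (gibbsWeight k S w) = Real.log ((1 + ∑ n ∈ S, k n * w ^ n) / w) := by
  have hmean := (hasSum_mul_gibbsWeight (k := k) (S := S) (w := w) fun n => n).tsum_eq
  have hentropy := (hasSum_mul_gibbsWeight (k := k) (S := S) (w := w)
    fun n => Real.log (∑ j ∈ S, k j * w ^ j) - Real.log w * n).tsum_eq
  simp only [sub_mul, one_mul, mul_assoc, sum_sub_distrib, ← mul_sum] at hcrit hentropy
  rw [growthRate, tsum_congr (gibbsWeight_mul_log_div hw hk), hmean]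
  simp only [sub_mul, mul_assoc]
  rw [hentropy, eq_add_of_sub_eq hcrit]
  have hx := sum_mul_pow_pos hw hk hS
  set x := ∑ n ∈ S, k n * w ^ n
  have hm : (1 + x) / x - 1 = x⁻¹ := by field_simp; ring
  have hm' : 1 - ((1 + x) / x)⁻¹ = (1 + x)⁻¹ := by field_simp; ring
  rw [Theta, hm, hm', Real.log_inv, Real.log_inv, Real.log_div (by positivity) hw.ne']
  field_simp
  ring

lemma exists_sum_sub_one_mul_eq_one (hk : ∀ n ∈ S, 0 ≤ k n) (h0 : 0 ∉ S) {j : ℕ} (hj : j ∈ S)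
    (hj2 : 2 ≤ j) (hkj : 0 < k j) :
    ∃ w : ℝ, 0 < w ∧ ∑ n ∈ S, ((n : ℝ) - 1) * (k n * w ^ n) = 1 := by
  set G : ℝ → ℝ := fun w => ∑ n ∈ S, ((n : ℝ) - 1) * (k n * w ^ n)
  have hcont : Continuous G := by fun_prop
  have hn1 : ∀ n ∈ S, (0 : ℝ) ≤ n - 1 := fun n hn =>
    sub_nonneg.2 (Nat.one_le_cast.2 (Nat.one_le_iff_ne_zero.2 fun h => h0 (h ▸ hn)))
  have hG0 : G 0 = 0 := sum_eq_zero fun n hn => by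
    rw [zero_pow fun h => h0 (h ▸ hn), mul_zero, mul_zero]
  set W := 1 + 1 / k j
  have hW : 1 ≤ W := le_add_of_nonneg_right (by positivity)
  have hGW : 1 ≤ G W := calc
    1 ≤ k j * W := by
      rw [mul_add, mul_one_div_cancel hkj.ne']
      linarith
    _ ≤ k j * W ^ j := by
      gcongr
      exact le_self_pow₀ hW (by omega)
    _ ≤ ((j : ℝ) - 1) * (k j * W ^ j) := by
      refine le_mul_of_one_le_left (by positivity) ?_
      have : (2 : ℝ) ≤ j := by exact_mod_cast hj2
      linarith
    _ ≤ G W := single_le_sum (f := fun n : ℕ => ((n : ℝ) - 1) * (k n * W ^ n))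
      (fun n hn => mul_nonneg (hn1 n hn) (mul_nonneg (hk n hn) (by positivity))) hj
  obtain ⟨w, ⟨hw0, -⟩, hGw⟩ := intermediate_value_Icc (zero_le_one.trans hW) hcont.continuousOn
    (Set.mem_Icc.2 ⟨hG0.le.trans zero_le_one, hGW⟩)
  refine ⟨w, hw0.lt_of_ne ?_, hGw⟩
  rintro rfl
  exact zero_ne_one (hG0.symm.trans hGw)

lemma exists_isAdmissible_growthRate_eq (hk : ∀ j, 1 ≤ j → 0 < k j) {N : ℕ} (hN : 2 ≤ N) :
    ∃ w, 0 < w ∧ ∃ p, IsAdmissible k p ∧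
      growthRate k p = Real.log ((1 + ∑ n ∈ Icc 1 N, k n * w ^ n) / w) := by
  have hkN : ∀ n ∈ Icc 1 N, 0 < k n := fun n hn => hk n (mem_Icc.1 hn).1
  have h0 : 0 ∉ Icc 1 N := by simp
  have h2 : 2 ∈ Icc 1 N := mem_Icc.2 ⟨one_le_two, hN⟩
  obtain ⟨w, hw, hcrit⟩ :=
    exists_sum_sub_one_mul_eq_one (fun n hn => (hkN n hn).le) h0 h2 le_rfl (hkN 2 h2)
  exact ⟨w, hw, _, isAdmissible_gibbsWeight hw hkN h0 ⟨2, h2⟩,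
    growthRate_gibbsWeight hw hkN ⟨2, h2⟩ hcrit⟩

lemma sum_Icc_mul_pow_mono (hk : ∀ j, 1 ≤ j → 0 ≤ k j) (hw : 0 ≤ w) :
    Monotone fun N => ∑ n ∈ Icc 1 N, k n * w ^ n := fun _ _ h =>
  sum_le_sum_of_subset_of_nonneg (Icc_subset_Icc_right h) fun n hn _ =>
    mul_nonneg (hk n (mem_Icc.1 hn).1) (pow_nonneg hw n)

lemma dominatesKTransform_of_forall_exists (hk : ∀ j, 1 ≤ j → 0 ≤ k j) {r b : ℝ}
    (h : ∀ N, ∃ w ∈ Set.Icc 0 b, 1 + ∑ n ∈ Icc 1 N, k n * w ^ n ≤ r * w) :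
    DominatesKTransform k r := by
  set A : ℕ → Set ℝ := fun N =>
    {w | w ∈ Set.Icc 0 b ∧ 1 + ∑ n ∈ Icc 1 N, k n * w ^ n ≤ r * w}
  have hclosed (N : ℕ) : IsClosed (A N) :=
    isClosed_Icc.and (isClosed_le (by fun_prop) (by fun_prop))
  obtain ⟨w, hw⟩ := IsCompact.nonempty_iInter_of_sequence_nonempty_isCompact_isClosed A
    (fun N w ⟨hwb, hle⟩ =>
      ⟨hwb, (add_le_add_right (sum_Icc_mul_pow_mono hk hwb.1 N.le_succ) 1).trans hle⟩)
    h (isCompact_Icc.of_isClosed_subset (hclosed 0) fun w hw => hw.1) hclosed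
  rw [Set.mem_iInter] at hw
  refine ⟨w, (hw 0).1.1.lt_of_ne ?_, fun N => (hw N).2⟩
  rintro rfl
  exact one_pos.not_ge (by simpa using (hw 0).2)

lemma dominatesKTransform_exp_of_growthRate_le (hk : ∀ j, 1 ≤ j → 0 < k j) {u : ℝ}
    (hu : ∀ p, IsAdmissible k p → growthRate k p ≤ u) : DominatesKTransform k (Real.exp u) := by
  have hk0 : ∀ j, 1 ≤ j → 0 ≤ k j := fun j hj => (hk j hj).le
  refine dominatesKTransform_of_forall_exists hk0 (b := Real.exp u / k 2) fun N => ?_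
  obtain ⟨w, hw, p, hp, hrate⟩ := exists_isAdmissible_growthRate_eq hk (Nat.le_add_left 2 N)
  have hmono := sum_Icc_mul_pow_mono hk0 hw.le
  have hle : 1 + ∑ n ∈ Icc 1 (N + 2), k n * w ^ n ≤ Real.exp u * w := by
    have hpos : 0 ≤ ∑ n ∈ Icc 1 (N + 2), k n * w ^ n := by simpa using hmono (N + 2).zero_le
    have hlog := hrate ▸ hu p hp
    rwa [Real.log_le_iff_le_exp (by positivity), div_le_iff₀ hw] at hlog
  refine ⟨w, ⟨hw.le, ?_⟩, (add_le_add_right (hmono (N.le_add_right 2)) 1).trans hle⟩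
  rw [le_div_iff₀' (hk 2 one_le_two)]
  refine le_of_mul_le_mul_right ?_ hw
  calc
    k 2 * w * w = k 2 * w ^ 2 := by ring
    _ ≤ ∑ n ∈ Icc 1 2, k n * w ^ n := single_le_sum
      (fun n hn => mul_nonneg (hk0 n (mem_Icc.1 hn).1) (pow_nonneg hw.le n)) (by simp)
    _ ≤ ∑ n ∈ Icc 1 (N + 2), k n * w ^ n := hmono (Nat.le_add_left 2 N)
    _ ≤ Real.exp u * w := by linarith

lemma DominatesKTransform.apply_one_lt {r : ℝ} (h : DominatesKTransform k r) : k 1 < r := by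
  obtain ⟨w, hw, hle⟩ := h
  have hle1 : 1 + k 1 * w ≤ r * w := by simpa using hle 1
  exact lt_of_mul_lt_mul_right (by linarith) hw.le

lemma isLUB_growthRate (hk : ∀ j, 1 ≤ j → 0 < k j) {ρ : ℝ}
    (hρ : IsGLB {r | DominatesKTransform k r} ρ) :
    IsLUB {v | ∃ p, IsAdmissible k p ∧ v = growthRate k p} (Real.log ρ) := by
  have hρ0 : 0 < ρ := (hk 1 le_rfl).trans_le (hρ.2 fun r hr => hr.apply_one_lt.le)
  constructor
  · rintro _ ⟨p, hp, rfl⟩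
    rw [Real.le_log_iff_exp_le hρ0]
    exact hρ.2 fun r hr => (Real.le_log_iff_exp_le hr.pos).1 (growthRate_le_log hk hp hr)
  · intro u hu
    rw [Real.log_le_iff_le_exp hρ0]
    exact hρ.1 (dominatesKTransform_exp_of_growthRate_le hk fun p hp => hu ⟨p, hp, rfl⟩)

end Variational

/-- **The maximum of the support via free cumulants (positive cumulants).**
Let `μ` be a compactly supported probability measure on `[0, ∞)` whose free cumulants
`k_j` (defined through the free moment–cumulant formula) are all strictly positive. Then
the maximum `ρ_μ = inf {r | μ((r,∞)) = 0}` of the support of `μ` satisfies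
`log ρ_μ = sup { (1/m₁(p)) ∑_n p_n log(k_n/p_n) + Θ(m₁(p))/m₁(p) : p ∈ 𝔐₁¹({1,2,…}) }`. -/
theorem support_edge_of_positive_free_cumulants
    (μ : Measure ℝ) [IsProbabilityMeasure μ]
    (hnonneg : μ (Set.Iio 0) = 0) (hcpt : ∃ R : ℝ, μ (Set.Ioi R) = 0)
    (k : ℕ → ℝ) (hkpos : ∀ j, 1 ≤ j → 0 < k j)
    (hmc : ∀ n : ℕ, 1 ≤ n →
      ∫ t, t ^ n ∂μ = ∑ π ∈ NCP n, ∏ V ∈ π, k V.card) :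
    Real.log (sInf {r : ℝ | μ (Set.Ioi r) = 0}) =
      sSup {v : ℝ | ∃ p : ℕ → ℝ, (∀ n, 0 ≤ p n) ∧ p 0 = 0 ∧ HasSum p 1 ∧
        Summable (fun n : ℕ => (n : ℝ) * p n) ∧
        Summable (fun n : ℕ => p n * Real.log (k n / p n)) ∧
        v = (∑' n : ℕ, (n : ℝ) * p n)⁻¹ * (∑' n : ℕ, p n * Real.log (k n / p n))
            + Theta (∑' n : ℕ, (n : ℝ) * p n) / (∑' n : ℕ, (n : ℝ) * p n)} := by
  have hk : ∀ j, 1 ≤ j → 0 ≤ k j := fun j hj => (hkpos j hj).le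
  have hmoment (n : ℕ) : ∫ t, t ^ n ∂μ = freeMoment k n := by
    rcases n.eq_zero_or_pos with rfl | hn
    · simp
    · exact hmc n hn
  have hLUB := isLUB_growthRate hkpos (isGLB_dominatesKTransform hnonneg hcpt hk hmoment)
  rw [← hLUB.csSup_eq hLUB.nonempty]
  congr 1
  ext v
  constructor
  · rintro ⟨p, ⟨hp0, hp, hp1, hm, hent⟩, rfl⟩
    exact ⟨p, hp0, hp, hp1, hm, hent, rfl⟩
  · rintro ⟨p, hp0, hp, hp1, hm, hent, rfl⟩
    exact ⟨p, ⟨hp0, hp, hp1, hm, hent⟩, rfl⟩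

end
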